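/- arXiv:1007.3436 — 11 statements merged into one kernel-verified Lean document; each statement's English description precedes it below -/
import Mathlib

section
/- For every integer n ≥ 2 and all positive real numbers a_1, ..., a_{n-1}, setting a_n = 1/(a_1 a_2 ··· a_{n-1}), the improper integral of 1/(1 - x_1² x_2² ··· x_n²) over the box (0, a_1) × (0, a_2) × ··· × (0, a_n) is equal to the integral of the same integrand over the unit cube (0,1)^n. -/
open MeasureTheory Real

theorem box_integral_eq_unit_cube_integral (n : ℕ) (hn : 2 ≤ n) (a : Fin n → ℝ)
    (ha : ∀ i, 0 < a i) (hprod : ∏ i, a i = 1) :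
    (∫ x : Fin n → ℝ in Set.univ.pi fun i => Set.Ioo 0 (a i),
        (1 - ∏ i, (x i) ^ 2)⁻¹) =
      ∫ x : Fin n → ℝ in Set.univ.pi fun _ => Set.Ioo (0 : ℝ) 1,
        (1 - ∏ i, (x i) ^ 2)⁻¹ := by
  let e : (Fin n → ℝ) ≃ₜ (Fin n → ℝ) :=
    Homeomorph.piCongrRight fun i => Homeomorph.mulLeft₀ (a i) (ha i).ne'
  have he : ∀ x i, e x i = a i * x i := fun x i => rfl
  have hmp : MeasurePreserving e volume volume := by
    refine ⟨e.continuous.measurable, ?_⟩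
    have h := Real.smul_map_diagonal_volume_pi (D := a)
      (by rw [Matrix.det_diagonal, hprod]; exact one_ne_zero)
    rw [Matrix.det_diagonal, hprod, abs_one, ENNReal.ofReal_one, one_smul] at h
    have hfun : (e : (Fin n → ℝ) → (Fin n → ℝ)) = Matrix.toLin' (Matrix.diagonal a) := by
      funext x i
      rw [he, Matrix.toLin'_apply, Matrix.mulVec_diagonal]
    rw [hfun]
    exact h
  rw [← hmp.setIntegral_preimage_emb e.measurableEmbedding]
  have hset : e ⁻¹' (Set.univ.pi fun i => Set.Ioo 0 (a i)) =
      Set.univ.pi fun _ => Set.Ioo (0 : ℝ) 1 := by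
    ext x
    simp only [Set.mem_preimage, Set.mem_univ_pi, Set.mem_Ioo, he]
    refine forall_congr' fun i => ?_
    rw [mul_pos_iff_of_pos_left (ha i), mul_lt_iff_lt_one_right (ha i)]
  rw [hset]
  simp only [he, mul_pow, Finset.prod_mul_distrib, Finset.prod_pow, hprod, one_pow, one_mul]
end

section
/- For every integer n ≥ 2, ζ(n) = (2^n/(2^n − 1)) · ∫_{(0,1)^n} 1/(1 − x_1² x_2² ··· x_n²) dx_1 ··· dx_n. -/
open MeasureTheory Real

lemma aux_int (k : ℕ) : ∫ x in Set.Ioo (0:ℝ) 1, x ^ (2 * k) = 1 / (2 * k + 1) := by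
  rw [← integral_Ioc_eq_integral_Ioo, ← intervalIntegral.integral_of_le zero_le_one, integral_pow]
  simp

theorem zeta_eq_const_mul_unit_cube_integral_sq (n : ℕ) (hn : 2 ≤ n) :
    (∑' k : ℕ, (1 : ℝ) / (k + 1) ^ n) =
      2 ^ n / (2 ^ n - 1) *
        ∫ x : Fin n → ℝ in Set.univ.pi fun _ => Set.Ioo (0 : ℝ) 1,
          (1 - ∏ i, (x i) ^ 2)⁻¹ := by
  have hS : Summable (fun k : ℕ => (1 : ℝ) / (k + 1) ^ n) := by
    have := (summable_nat_add_iff 1).2 (Real.summable_one_div_nat_pow.2 (show 1 < n by omega))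
    simpa using this
  have hodd : Summable (fun k : ℕ => (1 : ℝ) / (2 * k + 1) ^ n) := by
    have := hS.comp_injective (i := fun k : ℕ => 2 * k) (fun a b h => by simpa using h)
    simpa [Function.comp_def] using this
  have heven : Summable (fun k : ℕ => (1 : ℝ) / (2 * k + 1 + 1) ^ n) := by
    have := hS.comp_injective (i := fun k : ℕ => 2 * k + 1) (fun a b h => by simpa using h)
    simpa [Function.comp_def] using this
  have hsplit := tsum_even_add_odd (f := fun k : ℕ => (1 : ℝ) / (k + 1) ^ n)
    (by simpa using hodd) (by simpa using heven)
  have he : ∑' k : ℕ, (1 : ℝ) / (((2 * k + 1 : ℕ) : ℝ) + 1) ^ n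
      = (1 / 2 ^ n) * ∑' k : ℕ, (1 : ℝ) / (k + 1) ^ n := by
    rw [← tsum_mul_left]
    congr 1; ext k
    rw [div_mul_div_comm, ← mul_pow]
    push_cast
    ring_nf
  let F : ℕ → (Fin n → ℝ) → ℝ := fun k x => ∏ i, (x i) ^ (2 * k)
  let μ : Measure (Fin n → ℝ) := Measure.pi (fun _ => volume.restrict (Set.Ioo (0:ℝ) 1))
  have hμ : (volume : Measure (Fin n → ℝ)).restrict (Set.univ.pi fun _ => Set.Ioo (0 : ℝ) 1) = μ := by
    rw [volume_pi, Measure.restrict_pi_pi]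
  have hae : ∀ᵐ x ∂μ, ∀ i, x i ∈ Set.Ioo (0:ℝ) 1 := by
    rw [← hμ]
    filter_upwards [ae_restrict_mem (MeasurableSet.univ_pi fun _ => measurableSet_Ioo)] with x hx i
    exact hx i (Set.mem_univ i)
  have hFint : ∀ k, ∫ x, F k x ∂μ = 1 / (2 * k + 1) ^ n := by
    intro k
    have := integral_fintype_prod_eq_pow (ι := Fin n) (fun x : ℝ => x ^ (2 * k))
      (μ := volume.restrict (Set.Ioo (0:ℝ) 1))
    rw [this, aux_int]; simp
  have hFi : ∀ k, Integrable (F k) μ := by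
    intro k
    apply Integrable.fintype_prod (f := fun _ (x : ℝ) => x ^ (2 * k))
    intro i
    exact (((continuous_pow (2 * k)).continuousOn).integrableOn_compact isCompact_Icc).mono_set
      Set.Ioo_subset_Icc_self
  have hnorm : ∀ k x, ‖F k x‖ = F k x := by
    intro k x
    exact Real.norm_of_nonneg (Finset.prod_nonneg fun i _ => (even_two_mul k).pow_nonneg _)
  have key := (hasSum_integral_of_summable_integral_norm hFi (by
    simp only [hnorm, hFint]; exact hodd)).tsum_eq
  simp only [hFint] at key
  have hI : ∫ x, ∑' k, F k x ∂μ = ∫ x, (1 - ∏ i, (x i) ^ 2)⁻¹ ∂μ := by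
    apply integral_congr_ae
    filter_upwards [hae] with x hx
    have hlt : ∏ i, (x i) ^ 2 < 1 := by
      have h0 : (⟨0, by omega⟩ : Fin n) ∈ Finset.univ := Finset.mem_univ _
      rw [← Finset.mul_prod_erase _ _ h0]
      apply mul_lt_one_of_nonneg_of_lt_one_left (sq_nonneg _)
      · exact pow_lt_one₀ (hx _).1.le (hx _).2 two_ne_zero
      · exact Finset.prod_le_one (fun i _ => sq_nonneg _)
          fun i _ => pow_le_one₀ (hx i).1.le (hx i).2.le
    rw [← tsum_geometric_of_lt_one (Finset.prod_nonneg fun i _ => sq_nonneg _) hlt]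
    congr 1; ext k
    simp only [F, pow_mul, Finset.prod_pow]
  rw [hμ, ← hI, ← key]
  rw [he] at hsplit
  push_cast at hsplit
  have h2 : (1:ℝ) < 2 ^ n := one_lt_pow₀ one_lt_two (by omega)
  have h3 : (2:ℝ) ^ n - 1 ≠ 0 := by linarith
  field_simp at hsplit ⊢
  linarith
end

section
/- The double integral over the unit square of 1/(1 − xy) equals 4/3 times the double integral over the unit square of 1/(1 − x²y²); that is, ∫_0^1 ∫_0^1 1/(1 − xy) dx dy = (4/3) ∫_0^1 ∫_0^1 1/(1 − x²y²) dx dy. -/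
open MeasureTheory Real

lemma aux_pow_int (n : ℕ) : ∫ x in Set.Ioo (0:ℝ) 1, x ^ n = 1 / ((n:ℝ) + 1) := by
  rw [← integral_Ioc_eq_integral_Ioo, ← intervalIntegral.integral_of_le zero_le_one,
    integral_pow]
  simp

lemma aux_pow_integrable (n : ℕ) : IntegrableOn (fun x : ℝ => x ^ n) (Set.Ioo (0:ℝ) 1) :=
  ((continuous_pow n).integrableOn_Icc (a := 0) (b := 1)).mono_set Set.Ioo_subset_Icc_self

lemma aux_mono_integral (n : ℕ) :
    ∫ p : ℝ × ℝ in Set.Ioo (0 : ℝ) 1 ×ˢ Set.Ioo (0 : ℝ) 1, p.1 ^ n * p.2 ^ n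
      = 1 / ((n:ℝ) + 1) ^ 2 := by
  have h := setIntegral_prod_mul (μ := (volume : Measure ℝ)) (ν := (volume : Measure ℝ))
    (fun x : ℝ => x ^ n) (fun x : ℝ => x ^ n) (Set.Ioo (0:ℝ) 1) (Set.Ioo (0:ℝ) 1)
  rw [Measure.volume_eq_prod, h, aux_pow_int]
  field_simp

lemma aux_mono_integrable (n : ℕ) :
    IntegrableOn (fun p : ℝ × ℝ => p.1 ^ n * p.2 ^ n)
      (Set.Ioo (0 : ℝ) 1 ×ˢ Set.Ioo (0 : ℝ) 1) := by
  rw [IntegrableOn, Measure.volume_eq_prod, ← Measure.prod_restrict]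
  exact (aux_pow_integrable n).mul_prod (aux_pow_integrable n)

lemma aux_main (e : ℕ → ℕ) (g : ℝ × ℝ → ℝ)
    (hs : Summable fun n => 1 / ((e n : ℝ) + 1) ^ 2)
    (hg : ∀ p ∈ Set.Ioo (0 : ℝ) 1 ×ˢ Set.Ioo (0 : ℝ) 1,
      HasSum (fun n => p.1 ^ e n * p.2 ^ e n) (g p)) :
    ∫ p : ℝ × ℝ in Set.Ioo (0 : ℝ) 1 ×ˢ Set.Ioo (0 : ℝ) 1, g p
      = ∑' n, 1 / ((e n : ℝ) + 1) ^ 2 := by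
  have hm : MeasurableSet (Set.Ioo (0 : ℝ) 1 ×ˢ Set.Ioo (0 : ℝ) 1) :=
    measurableSet_Ioo.prod measurableSet_Ioo
  have hn : ∀ n, ∫ p : ℝ × ℝ in Set.Ioo (0 : ℝ) 1 ×ˢ Set.Ioo (0 : ℝ) 1,
      ‖p.1 ^ e n * p.2 ^ e n‖ = 1 / ((e n : ℝ) + 1) ^ 2 := by
    intro n
    rw [← aux_mono_integral]
    refine setIntegral_congr_fun hm ?_
    rintro p ⟨h1, h2⟩
    have := h1.1
    have := h2.1
    exact Real.norm_of_nonneg (by positivity)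
  have h := hasSum_integral_of_summable_integral_norm
    (μ := volume.restrict (Set.Ioo (0 : ℝ) 1 ×ˢ Set.Ioo (0 : ℝ) 1))
    (F := fun n (p : ℝ × ℝ) => p.1 ^ e n * p.2 ^ e n)
    (fun n => aux_mono_integrable (e n)) (by simpa only [hn] using hs)
  simp only [aux_mono_integral] at h
  rw [h.tsum_eq]
  exact setIntegral_congr_fun hm fun p hp => (hg p hp).tsum_eq.symm

lemma aux_hs : Summable fun n : ℕ => 1 / ((n : ℝ) + 1) ^ 2 := by
  have := (summable_nat_add_iff 1).2 (Real.summable_one_div_nat_pow.2 one_lt_two)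
  simpa using this

lemma aux_he : Summable fun n : ℕ => 1 / (((2 * n : ℕ) : ℝ) + 1) ^ 2 :=
    aux_hs.comp_injective (i := fun n : ℕ => 2 * n) (fun a b h => by dsimp only at h; omega)

lemma aux_num : ∑' n : ℕ, 1 / ((n : ℝ) + 1) ^ 2
    = 4 / 3 * ∑' n : ℕ, 1 / (((2 * n : ℕ) : ℝ) + 1) ^ 2 := by
  have hs := aux_hs
  have he := aux_he
  have ho : Summable fun n : ℕ => 1 / (((2 * n + 1 : ℕ) : ℝ) + 1) ^ 2 :=
    hs.comp_injective (i := fun n : ℕ => 2 * n + 1) (fun a b h => by dsimp only at h; omega)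
  have hsplit := tsum_even_add_odd (f := fun n : ℕ => 1 / ((n : ℝ) + 1) ^ 2) he ho
  have ho' : ∑' n : ℕ, 1 / (((2 * n + 1 : ℕ) : ℝ) + 1) ^ 2
      = 1 / 4 * ∑' n : ℕ, 1 / ((n : ℝ) + 1) ^ 2 := by
    rw [← tsum_mul_left]
    congr 1
    ext n
    push_cast
    rw [show (2 * (n:ℝ) + 1 + 1) = 2 * (n + 1) by ring, mul_pow]
    field_simp
    norm_num
  linarith

theorem double_integral_one_sub_xy_eq :
    (∫ p : ℝ × ℝ in Set.Ioo (0 : ℝ) 1 ×ˢ Set.Ioo (0 : ℝ) 1,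
        (1 - p.1 * p.2)⁻¹) =
      4 / 3 *
        ∫ p : ℝ × ℝ in Set.Ioo (0 : ℝ) 1 ×ˢ Set.Ioo (0 : ℝ) 1,
          (1 - p.1 ^ 2 * p.2 ^ 2)⁻¹ := by
  have key : ∀ p ∈ Set.Ioo (0 : ℝ) 1 ×ˢ Set.Ioo (0 : ℝ) 1, 0 ≤ p.1 * p.2 ∧ p.1 * p.2 < 1 := by
    rintro p ⟨⟨h1, h2⟩, h3, h4⟩
    exact ⟨by positivity, by nlinarith⟩
  rw [aux_main (fun n => n) (fun p => (1 - p.1 * p.2)⁻¹) aux_hs,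
    aux_main (fun n => 2 * n) (fun p => (1 - p.1 ^ 2 * p.2 ^ 2)⁻¹) aux_he]
  · exact aux_num
  · intro p hp
    obtain ⟨h0, h1⟩ := key p hp
    simp only [pow_mul, ← mul_pow]
    exact hasSum_geometric_of_lt_one (by positivity) (by nlinarith)
  · intro p hp
    obtain ⟨h0, h1⟩ := key p hp
    simp only [← mul_pow]
    exact hasSum_geometric_of_lt_one h0 h1
end

section
/- Let n ≥ 2 and let u_1, ..., u_n be real numbers (indices taken modulo n, so u_{n+1} = u_1). Let A be the n × n real matrix whose (i,i) entry is cosh(u_i)/cosh(u_{i+1}), whose (i, i+1) entry (cyclically, so including the entry in position (n,1)) is −sinh(u_i) sinh(u_{i+1})/cosh²(u_{i+1}), and whose all other entries are 0. Then det(A) = 1 − ∏_{i=1}^n tanh²(u_i). -/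
open Real

open Fin.NatCast Fin.CommRing in
lemma det_cyclic_aux (m : ℕ) (a b : Fin (m + 2) → ℝ) :
    Matrix.det (Matrix.of fun i j : Fin (m + 2) =>
        if j = i then a i else if j = i + 1 then b i else 0) =
      ∏ i, a i + (-1) ^ (m + 1) * ∏ i, b i := by
  have hne : ∀ i : Fin (m + 2), i + 1 ≠ i := by
    intro i h
    have h1 : (1 : Fin (m + 2)) = 0 := by simpa using h
    simp at h1
  rw [← Matrix.det_transpose, Matrix.det_apply']
  rw [Finset.sum_eq_add (1 : Equiv.Perm (Fin (m + 2))) (finRotate (m + 2))]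
  · simp [sign_finRotate, hne]
  · intro h
    have := congrArg (fun σ : Equiv.Perm (Fin (m + 2)) => σ 0) h
    simp only [finRotate_apply, Equiv.Perm.one_apply] at this
    exact hne 0 this.symm
  · rintro σ - ⟨h1, h2⟩
    by_contra hz
    have hp : ∀ i, σ i = i ∨ σ i = i + 1 := by
      intro i
      by_contra hi
      push Not at hi
      apply hz
      rw [Finset.prod_eq_zero (Finset.mem_univ i), mul_zero]
      simp [hi.1, hi.2]
    obtain ⟨i, hi⟩ : ∃ i, σ i ≠ i := by
      by_contra hc
      push Not at hc
      exact h1 (Equiv.ext hc)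
    have hi' : σ i = i + 1 := (hp i).resolve_left hi
    have key : ∀ k : ℕ, σ (i + (k : Fin (m + 2))) = i + (k : Fin (m + 2)) + 1 := by
      intro k
      induction k with
      | zero => simpa using hi'
      | succ k ih =>
        push_cast
        rw [← add_assoc]
        refine (hp _).resolve_left fun h => ?_
        exact hne _ (σ.injective (h.trans ih.symm))
    apply h2
    ext1 j
    have := key (j - i).val
    rw [Fin.cast_val_eq_self, add_sub_cancel] at this
    rw [this, finRotate_apply]
  · simp
  · simp

theorem det_jacobian_hyperbolic (n : ℕ) (hn : 2 ≤ n) [NeZero n] (u : Fin n → ℝ) :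
    Matrix.det (Matrix.of fun i j : Fin n =>
        if j = i then Real.cosh (u i) / Real.cosh (u (i + 1))
        else if j = i + 1 then
          -(Real.sinh (u i) * Real.sinh (u (i + 1))) / (Real.cosh (u (i + 1))) ^ 2
        else 0) =
      1 - ∏ i, Real.tanh (u i) ^ 2 := by
  obtain ⟨m, rfl⟩ : ∃ m, n = m + 2 := ⟨n - 2, by omega⟩
  refine (det_cyclic_aux m (fun i => Real.cosh (u i) / Real.cosh (u (i + 1)))
    (fun i => -(Real.sinh (u i) * Real.sinh (u (i + 1))) / (Real.cosh (u (i + 1))) ^ 2)).trans ?_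
  have hs : ∀ f : Fin (m + 2) → ℝ, ∏ i, f (i + 1) = ∏ i, f i := fun f =>
    Equiv.prod_comp (Equiv.addRight (1 : Fin (m + 2))) f
  have hc : ∏ i, Real.cosh (u i) ≠ 0 :=
    Finset.prod_ne_zero_iff.2 fun i _ => (Real.cosh_pos _).ne'
  have e1 : ∀ i, -(Real.sinh (u i) * Real.sinh (u (i + 1))) / (Real.cosh (u (i + 1))) ^ 2
      = (-1) * (Real.sinh (u i) * Real.sinh (u (i + 1)) / (Real.cosh (u (i + 1))) ^ 2) := by
    intro i; ring
  simp only [e1, Real.tanh_eq_sinh_div_cosh]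
  rw [Finset.prod_mul_distrib]
  simp only [Finset.prod_div_distrib, Finset.prod_mul_distrib, Finset.prod_pow]
  rw [hs (fun i => Real.cosh (u i)), hs (fun i => Real.sinh (u i)), div_self hc]
  simp only [Finset.prod_const, Finset.card_univ, Fintype.card_fin]
  have h : ((-1 : ℝ) ^ (m + 1)) * (-1) ^ (m + 2) = -1 := by
    rw [← pow_add]; exact Odd.neg_one_pow ⟨m + 1, by ring⟩
  rw [← mul_assoc, h]
  ring
end

section
/- Let x_1, x_2, x_3 ∈ (0,1) (so that x_1² x_2² x_3² < 1), and for each i ∈ {1,2,3} (indices modulo 3) define u_i = arcsinh( x_i · √( (1 + x_{i+1}² + x_{i-1}² x_{i+1}²) / (1 − x_1² x_2² x_3²) ) ). Then for each i (indices modulo 3), x_i = sinh(u_i)/cosh(u_{i+1}). -/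
open Real

lemma aux_dim_three (a b c D : ℝ) (hD : D = 1 - a ^ 2 * b ^ 2 * c ^ 2) (hpos : 0 < D) :
    a = Real.sinh (Real.arsinh (a * Real.sqrt ((1 + b ^ 2 + c ^ 2 * b ^ 2) / D))) /
      Real.cosh (Real.arsinh (b * Real.sqrt ((1 + c ^ 2 + a ^ 2 * c ^ 2) / D))) := by
  have h1 : 0 < (1 + b ^ 2 + c ^ 2 * b ^ 2) / D := by positivity
  have h2 : 0 ≤ (1 + c ^ 2 + a ^ 2 * c ^ 2) / D := by positivity
  have h3 : 1 + (b * Real.sqrt ((1 + c ^ 2 + a ^ 2 * c ^ 2) / D)) ^ 2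
      = (1 + b ^ 2 + c ^ 2 * b ^ 2) / D := by
    rw [mul_pow, Real.sq_sqrt h2]
    field_simp
    rw [hD]
    ring
  rw [Real.sinh_arsinh, Real.cosh_arsinh, h3]
  have := Real.sqrt_pos.mpr h1
  field_simp

theorem hyperbolic_inverse_formulas_dim_three (x : Fin 3 → ℝ)
    (hx : ∀ i, x i ∈ Set.Ioo (0 : ℝ) 1)
    (u : Fin 3 → ℝ)
    (hu : ∀ i, u i = Real.arsinh (x i *
      Real.sqrt ((1 + x (i + 1) ^ 2 + x (i - 1) ^ 2 * x (i + 1) ^ 2) /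
        (1 - x 0 ^ 2 * x 1 ^ 2 * x 2 ^ 2)))) :
    ∀ i, x i = Real.sinh (u i) / Real.cosh (u (i + 1)) := by
  have hsq : ∀ i, 0 < x i ^ 2 ∧ x i ^ 2 < 1 := fun i =>
    ⟨pow_pos (hx i).1 2, pow_lt_one₀ (hx i).1.le (hx i).2 two_ne_zero⟩
  have hpos : 0 < 1 - x 0 ^ 2 * x 1 ^ 2 * x 2 ^ 2 := by
    have h01 : x 0 ^ 2 * x 1 ^ 2 < 1 :=
      mul_lt_one_of_nonneg_of_lt_one_left (hsq 0).1.le (hsq 0).2 (hsq 1).2.le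
    have h012 : x 0 ^ 2 * x 1 ^ 2 * x 2 ^ 2 < 1 :=
      mul_lt_one_of_nonneg_of_lt_one_left (mul_pos (hsq 0).1 (hsq 1).1).le h01 (hsq 2).2.le
    linarith
  intro i
  have e1 : i + 1 + 1 = i - 1 := by revert i; decide
  have e2 : i + 1 - 1 = i := by revert i; decide
  rw [hu i, hu (i + 1), e1, e2]
  refine aux_dim_three (x i) (x (i + 1)) (x (i - 1)) _ ?_ hpos
  have e3 : i = 0 ∨ i = 1 ∨ i = 2 := by revert i; decide
  rcases e3 with rfl | rfl | rfl
  · rw [show (0 + 1 : Fin 3) = 1 by decide, show (0 - 1 : Fin 3) = 2 by decide]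
  · rw [show (1 + 1 : Fin 3) = 2 by decide, show (1 - 1 : Fin 3) = 0 by decide]; ring
  · rw [show (2 + 1 : Fin 3) = 0 by decide, show (2 - 1 : Fin 3) = 1 by decide]; ring
end

section
/- The limit as a → 0⁺ of ∫_0^{arcsinh(a)} arcsinh( cosh(u) / a ) du is 0. -/
open Real Filter

theorem tendsto_integral_arsinh_cosh_div_zero :
    Filter.Tendsto
      (fun a : ℝ => ∫ u in (0 : ℝ)..(Real.arsinh a), Real.arsinh (Real.cosh u / a))
      (nhdsWithin 0 (Set.Ioi 0)) (nhds 0) := by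
  have hlim : Tendsto (fun a : ℝ => Real.log 5 * a - Real.log a * a)
      (nhdsWithin 0 (Set.Ioi 0)) (nhds 0) := by
    have h1 : Tendsto (fun a : ℝ => Real.log a * a) (nhdsWithin 0 (Set.Ioi 0)) (nhds 0) := by
      simpa only [Real.rpow_one] using tendsto_log_mul_rpow_nhdsGT_zero zero_lt_one
    have h2 : Tendsto (fun a : ℝ => Real.log 5 * a) (nhdsWithin 0 (Set.Ioi 0)) (nhds 0) := by
      have : Continuous (fun a : ℝ => Real.log 5 * a) := by fun_prop
      have h := this.tendsto 0
      simp only [mul_zero] at h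
      exact h.mono_left nhdsWithin_le_nhds
    simpa using h2.sub h1
  refine squeeze_zero_norm' ?_ hlim
  filter_upwards [Ioo_mem_nhdsGT (zero_lt_one : (0 : ℝ) < 1)] with a ha
  obtain ⟨ha0, ha1⟩ := ha
  have hs0 : 0 < Real.arsinh a := Real.arsinh_pos_iff.2 ha0
  have hsa : Real.arsinh a ≤ a := by
    rw [← Real.sinh_le_sinh, Real.sinh_arsinh]
    exact Real.self_le_sinh_iff.2 ha0.le
  have hlog : 0 ≤ Real.log (5 / a) := by
    apply Real.log_nonneg
    rw [le_div_iff₀ ha0]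
    linarith
  have hb : ∀ u ∈ Set.uIoc 0 (Real.arsinh a),
      ‖Real.arsinh (Real.cosh u / a)‖ ≤ Real.log (5 / a) := by
    intro u hu
    rw [Set.uIoc_of_le hs0.le] at hu
    have hc : Real.cosh u ≤ 2 := by
      have h1 : Real.cosh u ≤ Real.cosh (Real.arsinh a) := by
        rw [Real.cosh_le_cosh, abs_of_pos hu.1, abs_of_pos hs0]
        exact hu.2
      rw [Real.cosh_arsinh] at h1
      refine h1.trans (Real.sqrt_le_iff.2 ⟨by norm_num, by nlinarith⟩)
    have hp : 0 < Real.cosh u / a := div_pos (Real.cosh_pos u) ha0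
    rw [Real.norm_of_nonneg (Real.arsinh_nonneg_iff.2 hp.le),
      Real.le_log_iff_exp_le (by positivity), Real.exp_arsinh]
    have hi : 1 < 1 / a := by rw [lt_div_iff₀ ha0]; linarith
    have hx : Real.cosh u / a ≤ 2 * (1 / a) := by
      rw [mul_one_div]; gcongr
    have h5 : 5 / a = 5 * (1 / a) := by ring
    have hq : √(1 + (Real.cosh u / a) ^ 2) ≤ 3 * (1 / a) :=
      Real.sqrt_le_iff.2 ⟨by linarith, by nlinarith⟩
    linarith
  refine (intervalIntegral.norm_integral_le_of_norm_le_const hb).trans ?_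
  rw [sub_zero, abs_of_pos hs0, ← sub_mul, ← Real.log_div (by norm_num) ha0.ne']
  gcongr
end

section
/- The improper integral ∫_0^∞ ln( coth(x) ) dx converges and equals π²/8. -/
open MeasureTheory Real

/-- The hyperbolic cotangent, `coth x = cosh x / sinh x`. -/
noncomputable def coth (x : ℝ) : ℝ := Real.cosh x / Real.sinh x

theorem aux_hasSum_odd :
    HasSum (fun k : ℕ => (1 : ℝ) / (2 * (k : ℝ) + 1) ^ 2) (π ^ 2 / 8) := by
  have hz := hasSum_zeta_two
  have he : HasSum (fun k : ℕ => (1 : ℝ) / ((2 * k : ℕ) : ℝ) ^ 2) (1 / 4 * (π ^ 2 / 6)) := by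
    refine Eq.subst (motive := fun f => HasSum f _) (funext fun k => ?_) (hz.mul_left (1 / 4))
    push_cast
    simp only [mul_pow, one_div, mul_inv]
    ring
  have hs : Summable (fun k : ℕ => (1 : ℝ) / ((2 * k + 1 : ℕ) : ℝ) ^ 2) :=
    hz.summable.comp_injective (i := fun k : ℕ => 2 * k + 1) (fun a b h => by simpa using h)
  have h := (HasSum.even_add_odd (f := fun n : ℕ => (1 : ℝ) / (n : ℝ) ^ 2) he hs.hasSum).unique hz
  have h2 := hs.hasSum
  rw [show (∑' k : ℕ, (1 : ℝ) / ((2 * k + 1 : ℕ) : ℝ) ^ 2) = π ^ 2 / 8 by linarith] at h2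
  simpa using h2

theorem aux_series {x : ℝ} (hx : 0 < x) :
    HasSum (fun k : ℕ => 2 / (2 * (k : ℝ) + 1) * rexp (-(2 * (2 * (k : ℝ) + 1)) * x))
      (Real.log (coth x)) := by
  have hq1 : rexp (-(2 * x)) < 1 := by
    rw [Real.exp_lt_one_iff]; linarith
  have hq0 := Real.exp_pos (-(2 * x))
  have h := hasSum_log_sub_log_of_abs_lt_one (x := rexp (-(2 * x))) (by rwa [abs_of_pos hq0])
  rw [← Real.log_div (by linarith) (by linarith)] at h
  have e : coth x = (1 + rexp (-(2 * x))) / (1 - rexp (-(2 * x))) := by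
    have hs := Real.sinh_pos_iff.2 hx
    rw [coth, div_eq_div_iff hs.ne' (by linarith), Real.cosh_eq, Real.sinh_eq,
      show -(2 * x) = -x + -x by ring, Real.exp_add]
    have : rexp x * rexp (-x) = 1 := by rw [← Real.exp_add]; simp
    linear_combination (-rexp (-x)) * this
  rw [e]
  refine Eq.subst (motive := fun f => HasSum f _) (funext fun k => ?_) h
  rw [← Real.exp_nat_mul]
  push_cast
  rw [show (2 * (k : ℝ) + 1) * -(2 * x) = -(2 * (2 * (k : ℝ) + 1)) * x by ring]
  ring

theorem integral_log_coth_eq_pi_sq_div_eight :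
    IntegrableOn (fun x => Real.log (coth x)) (Set.Ioi 0) volume ∧
      ∫ x in Set.Ioi (0 : ℝ), Real.log (coth x) = π ^ 2 / 8 := by
  have hneg : ∀ k : ℕ, -(2 * (2 * (k : ℝ) + 1)) < 0 := fun k => by
    have : (0 : ℝ) ≤ k := k.cast_nonneg
    linarith
  have hI : ∀ k : ℕ, ∫ x in Set.Ioi (0 : ℝ),
      2 / (2 * (k : ℝ) + 1) * rexp (-(2 * (2 * (k : ℝ) + 1)) * x)
        = 1 / (2 * (k : ℝ) + 1) ^ 2 := fun k => by
    rw [integral_const_mul, integral_exp_mul_Ioi (hneg k)]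
    have : (2 * (k : ℝ) + 1) ≠ 0 := by positivity
    simp only [mul_zero, Real.exp_zero]
    field_simp
  have key := hasSum_integral_of_summable_integral_norm (μ := volume.restrict (Set.Ioi (0 : ℝ)))
    (F := fun (k : ℕ) (x : ℝ) => 2 / (2 * (k : ℝ) + 1) * rexp (-(2 * (2 * (k : ℝ) + 1)) * x))
    (fun k => (integrableOn_exp_mul_Ioi (hneg k) 0).const_mul _)
    (by
      refine (summable_congr fun k => ?_).2 aux_hasSum_odd.summable
      rw [← hI k]
      congr 1
      ext x
      rw [Real.norm_of_nonneg (by positivity)])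
  have h2 : ∫ x in Set.Ioi (0 : ℝ), Real.log (coth x) = π ^ 2 / 8 := by
    simp only [hI] at key
    rw [← key.unique aux_hasSum_odd]
    exact setIntegral_congr_fun measurableSet_Ioi fun x hx => (aux_series hx).tsum_eq.symm
  refine ⟨?_, h2⟩
  by_contra hc
  rw [integral_undef hc] at h2
  have := Real.pi_pos
  have : 0 < π ^ 2 / 8 := by positivity
  linarith
end

section
/- Define F(α) = (1/2) ∫_0^∞ arctanh( α · tanh(x) ) / sinh(x) dx for α ∈ [0, 1). Then for every α ∈ (0, 1), F is differentiable at α with derivative F′(α) = (1/2) ∫_0^∞ cosh(x) / (1 + (1 − α²) sinh²(x)) dx; moreover F(0) = 0. -/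
open MeasureTheory Real

/-- The inverse hyperbolic tangent, `arctanh z = (1/2) ln ((1 + z)/(1 − z))` on `(−1, 1)`. -/
noncomputable def arctanh (z : ℝ) : ℝ := Real.log ((1 + z) / (1 - z)) / 2

theorem aux_meas (α : ℝ) :
    Measurable (fun x : ℝ => arctanh (α * Real.tanh x) / Real.sinh x) := by
  unfold arctanh
  simp only [Real.tanh_eq_sinh_div_cosh]
  have h1 : Measurable Real.sinh := Real.measurable_sinh
  have h2 : Measurable Real.cosh := Real.measurable_cosh
  fun_prop

theorem aux_exp (x : ℝ) : 1 / Real.cosh x ≤ 2 * Real.exp (-x) := by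
  have hc := Real.cosh_pos x
  rw [div_le_iff₀ hc, Real.cosh_eq]
  have h : Real.exp (-x) * Real.exp x = 1 := by rw [← Real.exp_add]; simp
  nlinarith [Real.exp_pos (-x)]

theorem aux_tanh {x : ℝ} (hx : 0 < x) : 0 < Real.tanh x ∧ Real.tanh x < 1 := by
  have hs := Real.sinh_pos_iff.2 hx
  have hc := Real.cosh_pos x
  rw [Real.tanh_eq_sinh_div_cosh]
  exact ⟨by positivity, (div_lt_one hc).2 (Real.sinh_lt_cosh x)⟩

theorem aux_int_s11 (C : ℝ) :
    Integrable (fun x : ℝ => C * (2 * Real.exp (-x))) (volume.restrict (Set.Ioi 0)) := by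
  have h := integrableOn_exp_neg_Ioi 0
  exact (h.const_mul 2).const_mul C

theorem aux_bound {α x : ℝ} (h0 : 0 < α) (h1 : α < 1) (hx : 0 < x) :
    ‖arctanh (α * Real.tanh x) / Real.sinh x‖ ≤ (1 / (1 - α)) * (2 * Real.exp (-x)) := by
  obtain ⟨ht0, ht1⟩ := aux_tanh hx
  have hs := Real.sinh_pos_iff.2 hx
  have hc := Real.cosh_pos x
  have hts : Real.tanh x / Real.sinh x = 1 / Real.cosh x := by
    rw [Real.tanh_eq_sinh_div_cosh]; field_simp
  set t := Real.tanh x with ht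
  have hα : 0 < 1 - α := by linarith
  have hz : 0 < α * t := by positivity
  have hz1 : α * t < α := by nlinarith
  have hz2 : 0 < 1 - α * t := by linarith
  have hge : 1 ≤ (1 + α * t) / (1 - α * t) := by
    rw [le_div_iff₀ hz2]; linarith
  have hlog0 := Real.log_nonneg hge
  have hlog := Real.log_le_sub_one_of_pos (lt_of_lt_of_le one_pos hge)
  have hA : arctanh (α * t) ≤ t / (1 - α) := by
    unfold arctanh
    have e : (1 + α * t) / (1 - α * t) - 1 = 2 * (α * t / (1 - α * t)) := by
      field_simp; ring
    have : α * t / (1 - α * t) ≤ t / (1 - α) := by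
      apply div_le_div₀ <;> nlinarith
    linarith
  have hA0 : 0 ≤ arctanh (α * t) := by unfold arctanh; positivity
  rw [Real.norm_of_nonneg (by positivity)]
  calc arctanh (α * t) / Real.sinh x ≤ (t / (1 - α)) / Real.sinh x := by gcongr
    _ = (1 / (1 - α)) * (t / Real.sinh x) := by ring
    _ ≤ _ := by
      rw [hts]; exact mul_le_mul_of_nonneg_left (aux_exp x) (by positivity)

theorem aux_deriv {α x : ℝ} (h0 : 0 < α) (h1 : α < 1) (hx : 0 < x) :
    HasDerivAt (fun a => arctanh (a * Real.tanh x) / Real.sinh x)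
      (Real.cosh x / (1 + (1 - α ^ 2) * Real.sinh x ^ 2)) α := by
  obtain ⟨ht0, ht1⟩ := aux_tanh hx
  have hs := Real.sinh_pos_iff.2 hx
  have hc := Real.cosh_pos x
  have hcs := Real.cosh_sq x
  have hsc := Real.sinh_lt_cosh x
  have hte : Real.tanh x * Real.cosh x = Real.sinh x := by
    rw [Real.tanh_eq_sinh_div_cosh]; field_simp
  set t := Real.tanh x with ht
  have hz1 : 0 < 1 - α * t := by nlinarith
  have hz2 : 0 < 1 + α * t := by positivity
  have hd : HasDerivAt (fun a : ℝ => a * t) t α := by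
    simpa using (hasDerivAt_id α).mul_const t
  have h := (((hd.const_add 1).div (hd.const_sub 1) hz1.ne').log
    (div_pos hz2 hz1).ne').div_const 2 |>.div_const (Real.sinh x)
  have hD : 0 < 1 + (1 - α ^ 2) * Real.sinh x ^ 2 := by
    have : 0 < 1 - α ^ 2 := by nlinarith
    positivity
  have hDe : 1 + (1 - α ^ 2) * Real.sinh x ^ 2
      = Real.cosh x ^ 2 * ((1 - α * t) * (1 + α * t)) := by
    rw [← hte] at hcs ⊢
    linear_combination -hcs
  unfold arctanh
  refine h.congr_deriv ?_
  simp only [Pi.div_apply]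
  rw [hDe, ← hte]
  field_simp
  ring

theorem aux_dbound {α β x : ℝ} (h0 : 0 < α) (h1 : α < β) (hβ : β < 1) :
    ‖Real.cosh x / (1 + (1 - α ^ 2) * Real.sinh x ^ 2)‖
      ≤ (1 / (1 - β ^ 2)) * (2 * Real.exp (-x)) := by
  have hc := Real.cosh_pos x
  have hcs := Real.cosh_sq x
  have hb : 0 < 1 - β ^ 2 := by nlinarith
  have hab : 1 - β ^ 2 ≤ 1 - α ^ 2 := by nlinarith
  have ha : 0 < 1 - α ^ 2 := by linarith
  have hD : (1 - β ^ 2) * Real.cosh x ^ 2 ≤ 1 + (1 - α ^ 2) * Real.sinh x ^ 2 := by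
    rw [hcs]; nlinarith [sq_nonneg (Real.sinh x), sq_nonneg β]
  rw [Real.norm_of_nonneg (by positivity)]
  calc _ ≤ Real.cosh x / ((1 - β ^ 2) * Real.cosh x ^ 2) := by gcongr
    _ = (1 / (1 - β ^ 2)) * (1 / Real.cosh x) := by field_simp
    _ ≤ _ := mul_le_mul_of_nonneg_left (aux_exp x) (by positivity)

theorem hasDerivAt_F (F : ℝ → ℝ)
    (hF : ∀ α : ℝ, F α = (1 / 2) * ∫ x in Set.Ioi (0 : ℝ),
      arctanh (α * Real.tanh x) / Real.sinh x) :
    (∀ α ∈ Set.Ioo (0 : ℝ) 1,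
        HasDerivAt F
          ((1 / 2) * ∫ x in Set.Ioi (0 : ℝ),
            Real.cosh x / (1 + (1 - α ^ 2) * Real.sinh x ^ 2)) α) ∧
      F 0 = 0 := by
  refine ⟨?_, by rw [hF]; simp [arctanh]⟩
  rintro α ⟨h0, h1⟩
  have hFe : F = fun α => (1 / 2) * ∫ x in Set.Ioi (0 : ℝ),
      arctanh (α * Real.tanh x) / Real.sinh x := funext hF
  rw [hFe]
  apply HasDerivAt.const_mul
  have hβ : (1 + α) / 2 < 1 := by linarith
  refine (hasDerivAt_integral_of_dominated_loc_of_deriv_le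
    (F := fun a x => arctanh (a * Real.tanh x) / Real.sinh x)
    (F' := fun a x => Real.cosh x / (1 + (1 - a ^ 2) * Real.sinh x ^ 2))
    (s := Set.Ioo 0 ((1 + α) / 2))
    (bound := fun x => (1 / (1 - ((1 + α) / 2) ^ 2)) * (2 * Real.exp (-x)))
    (Ioo_mem_nhds h0 (by linarith)) ?_ ?_ ?_ ?_ (aux_int_s11 _) ?_).2
  · exact Filter.Eventually.of_forall fun a => (aux_meas a).aestronglyMeasurable
  · refine (aux_int_s11 (1 / (1 - α))).mono' (aux_meas α).aestronglyMeasurable ?_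
    filter_upwards [ae_restrict_mem measurableSet_Ioi] with x hx
    exact aux_bound h0 h1 hx
  · have e1 : Measurable Real.sinh := Real.measurable_sinh
    have e2 : Measurable Real.cosh := Real.measurable_cosh
    exact Measurable.aestronglyMeasurable (by fun_prop)
  · exact Filter.Eventually.of_forall fun x a ha => aux_dbound ha.1 ha.2 hβ
  · filter_upwards [ae_restrict_mem measurableSet_Ioi] with x hx a ha
    exact aux_deriv ha.1 (ha.2.trans hβ) hx
end

section
/- For every integer n ≥ 2, the improper integral ∫_0^∞ (ln(coth(x)))^{n−1} dx converges and equals (n − 1)! · Σ_{q=0}^∞ 1/(2q + 1)^n. -/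
open MeasureTheory Real

/-- The involution `t ↦ log ((1 + e^{-t}) / (1 - e^{-t}))` of `(0, ∞)`. -/
noncomputable def logCothHalf (t : ℝ) : ℝ := Real.log ((1 + Real.exp (-t)) / (1 - Real.exp (-t)))

lemma exp_neg_lt_one_aux {t : ℝ} (ht : 0 < t) : Real.exp (-t) < 1 := by
  rw [Real.exp_lt_one_iff]; linarith

lemma logCothHalf_pos {t : ℝ} (ht : 0 < t) : 0 < logCothHalf t := by
  have h1 := exp_neg_lt_one_aux ht
  have h0 := Real.exp_pos (-t)
  apply Real.log_pos
  rw [lt_div_iff₀ (by linarith)]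
  linarith

lemma logCothHalf_invol {t : ℝ} (ht : 0 < t) : logCothHalf (logCothHalf t) = t := by
  have h1 := exp_neg_lt_one_aux ht
  have h0 := Real.exp_pos (-t)
  have hd : 0 < 1 - Real.exp (-t) := by linarith
  have e : Real.exp (-logCothHalf t) = (1 - Real.exp (-t)) / (1 + Real.exp (-t)) := by
    rw [Real.exp_neg, logCothHalf, Real.exp_log (by positivity), inv_div]
  have key : (1 + Real.exp (-logCothHalf t)) / (1 - Real.exp (-logCothHalf t)) = Real.exp t := by
    have h2 : Real.exp t = (Real.exp (-t))⁻¹ := by rw [Real.exp_neg, inv_inv]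
    rw [e, h2]
    generalize Real.exp (-t) = u at *
    have : 1 - (1 - u) / (1 + u) = 2 * u / (1 + u) := by field_simp; ring
    rw [this]
    have : 1 + (1 - u) / (1 + u) = 2 / (1 + u) := by field_simp; ring
    rw [this]
    field_simp
  rw [logCothHalf, key, Real.log_exp]

lemma log_coth_eq {x : ℝ} (hx : 0 < x) : Real.log (coth x) = logCothHalf (2 * x) := by
  have h1 := exp_neg_lt_one_aux (show 0 < 2 * x by linarith)
  have h0 := Real.exp_pos (x)
  have hd : 0 < 1 - Real.exp (-(2 * x)) := by linarith
  rw [logCothHalf, coth, Real.cosh_eq, Real.sinh_eq]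
  congr 1
  have e1 : Real.exp (-(2 * x)) = Real.exp (-x) / Real.exp x := by
    rw [← Real.exp_sub]; congr 1; ring
  rw [e1] at hd ⊢
  have h2 : Real.exp (-x) < Real.exp x := by rw [Real.exp_lt_exp]; linarith
  have h3 : Real.exp x - Real.exp (-x) ≠ 0 := by linarith
  field_simp

lemma hasDerivAt_half_logCothHalf {t : ℝ} (ht : 0 < t) :
    HasDerivAt (fun t => logCothHalf t / 2)
      (-(Real.exp (-t) / (1 - Real.exp (-t) ^ 2))) t := by
  have h1 := exp_neg_lt_one_aux ht
  have h0 := Real.exp_pos (-t)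
  have hd : 0 < 1 - Real.exp (-t) := by linarith
  have hE : HasDerivAt (fun t : ℝ => Real.exp (-t)) (-Real.exp (-t)) t := by
    simpa using (hasDerivAt_neg t).exp
  have h := (((hE.const_add 1).div (hE.const_sub 1) hd.ne').log
    (by simp only [Pi.div_apply]; positivity)).div_const 2
  refine h.congr_deriv ?_
  simp only [Pi.div_apply]
  generalize Real.exp (-t) = u at *
  have : 1 - u ^ 2 = (1 - u) * (1 + u) := by ring
  rw [this]
  field_simp
  ring

lemma image_half_logCothHalf :
    (fun t => logCothHalf t / 2) '' Set.Ioi 0 = Set.Ioi (0 : ℝ) := by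
  ext x
  constructor
  · rintro ⟨t, ht, rfl⟩
    exact half_pos (logCothHalf_pos ht)
  · intro hx
    have hx2 : 0 < 2 * x := mul_pos two_pos hx
    refine ⟨logCothHalf (2 * x), logCothHalf_pos hx2, ?_⟩
    simp only [logCothHalf_invol hx2]
    ring

lemma injOn_half_logCothHalf :
    Set.InjOn (fun t => logCothHalf t / 2) (Set.Ioi (0 : ℝ)) := by
  intro a ha b hb hab
  have h : logCothHalf a = logCothHalf b := by simp only at hab; linarith
  rw [← logCothHalf_invol ha, h, logCothHalf_invol hb]

lemma integral_term (m : ℕ) (q : ℕ) :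
    ∫ t in Set.Ioi (0 : ℝ), t ^ m * Real.exp (-((2 * (q : ℝ) + 1) * t)) =
      (Nat.factorial m) * ((1 : ℝ) / (2 * (q : ℝ) + 1) ^ (m + 1)) := by
  have h := Real.integral_rpow_mul_exp_neg_mul_Ioi (a := (m : ℝ) + 1) (r := 2 * (q : ℝ) + 1)
    (by positivity) (by positivity)
  rw [Real.Gamma_nat_eq_factorial] at h
  simp only [add_sub_cancel_right, Real.rpow_natCast] at h
  rw [h, mul_comm]
  congr 1
  rw [← Nat.cast_add_one, Real.rpow_natCast]
  simp

lemma summable_term (m : ℕ) (hm : 1 ≤ m) :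
    Summable (fun q : ℕ => (1 : ℝ) / (2 * (q : ℝ) + 1) ^ (m + 1)) := by
  have h := (Real.summable_one_div_nat_pow (p := m + 1)).2 (by omega)
  have := h.comp_injective (i := fun q : ℕ => 2 * q + 1) (fun a b hab => by simp at hab; omega)
  simpa [Function.comp_def] using this

lemma hasSum_term (m : ℕ) (hm : 1 ≤ m) :
    HasSum (fun q : ℕ => (Nat.factorial m) * ((1 : ℝ) / (2 * (q : ℝ) + 1) ^ (m + 1)))
      (∫ t in Set.Ioi (0 : ℝ), (Real.exp (-t) / (1 - Real.exp (-t) ^ 2)) * t ^ m) := by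
  have hS := (summable_term m hm).mul_left (Nat.factorial m : ℝ)
  have hint : ∀ q : ℕ, IntegrableOn
      (fun t : ℝ => t ^ m * Real.exp (-((2 * (q : ℝ) + 1) * t))) (Set.Ioi 0) := by
    intro q
    by_contra hcon
    have h1 := integral_term m q
    rw [integral_undef hcon] at h1
    have : (0 : ℝ) < (Nat.factorial m) * ((1 : ℝ) / (2 * (q : ℝ) + 1) ^ (m + 1)) := by positivity
    linarith
  have h := hasSum_integral_of_summable_integral_norm hint (by
    refine hS.congr fun q => ?_
    rw [← integral_term]
    refine (setIntegral_congr_fun measurableSet_Ioi fun t ht => ?_).symm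
    have ht : (0 : ℝ) < t := ht
    rw [Real.norm_of_nonneg (by positivity)])
  simp only [integral_term] at h
  refine (congrArg (HasSum _) ?_).mpr h
  refine setIntegral_congr_fun measurableSet_Ioi fun t ht => ?_
  have ht : (0 : ℝ) < t := ht
  have h1 := exp_neg_lt_one_aux ht
  have h0 := Real.exp_pos (-t)
  have hg := (hasSum_geometric_of_lt_one (r := Real.exp (-t) ^ 2) (by positivity)
    (by nlinarith)).mul_left (Real.exp (-t) * t ^ m)
  have : ∀ q : ℕ, t ^ m * Real.exp (-((2 * (q : ℝ) + 1) * t)) =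
      Real.exp (-t) * t ^ m * (Real.exp (-t) ^ 2) ^ q := by
    intro q
    have : Real.exp (-((2 * (q : ℝ) + 1) * t)) = Real.exp (-t) * (Real.exp (-t) ^ 2) ^ q := by
      rw [← pow_mul, ← pow_succ', ← Real.exp_nat_mul]
      congr 1
      push_cast
      ring
    rw [this]; ring
  simp only [this]
  rw [hg.tsum_eq]
  ring

theorem integral_log_coth_pow_eq_factorial_mul_tsum (n : ℕ) (hn : 2 ≤ n) :
    IntegrableOn (fun x => Real.log (coth x) ^ (n - 1)) (Set.Ioi 0) volume ∧
      ∫ x in Set.Ioi (0 : ℝ), Real.log (coth x) ^ (n - 1) =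
        (Nat.factorial (n - 1)) * ∑' q : ℕ, (1 : ℝ) / (2 * (q : ℝ) + 1) ^ n := by
  obtain ⟨m, rfl⟩ : ∃ m, n = m + 1 := ⟨n - 1, by omega⟩
  have hm : 1 ≤ m := by omega
  simp only [Nat.add_sub_cancel]
  have hval : ∫ x in Set.Ioi (0 : ℝ), Real.log (coth x) ^ m =
      (Nat.factorial m) * ∑' q : ℕ, (1 : ℝ) / (2 * (q : ℝ) + 1) ^ (m + 1) := by
    rw [← tsum_mul_left, (hasSum_term m hm).tsum_eq]
    have hc := integral_image_eq_integral_abs_deriv_smul (measurableSet_Ioi (a := (0 : ℝ)))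
      (fun t ht => (hasDerivAt_half_logCothHalf ht).hasDerivWithinAt) injOn_half_logCothHalf
      (fun x => Real.log (coth x) ^ m)
    rw [image_half_logCothHalf] at hc
    rw [hc]
    refine setIntegral_congr_fun measurableSet_Ioi fun t ht => ?_
    have ht : (0 : ℝ) < t := ht
    have h1 := exp_neg_lt_one_aux ht
    have h0 := Real.exp_pos (-t)
    have hd : 0 < 1 - Real.exp (-t) ^ 2 := by nlinarith
    simp only [smul_eq_mul]
    rw [abs_neg, abs_of_pos (by positivity), log_coth_eq (half_pos (logCothHalf_pos ht)),
      mul_div_cancel₀ _ (two_ne_zero), logCothHalf_invol ht]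
  refine ⟨?_, hval⟩
  by_contra hcon
  rw [integral_undef hcon] at hval
  have hpos : (0 : ℝ) < ∑' q : ℕ, (1 : ℝ) / (2 * (q : ℝ) + 1) ^ (m + 1) :=
    (summable_term m hm).tsum_pos (fun q => by positivity) 0 (by positivity)
  have : (0 : ℝ) < (Nat.factorial m) * ∑' q : ℕ, (1 : ℝ) / (2 * (q : ℝ) + 1) ^ (m + 1) := by
    positivity
  linarith
end

section
/- For every integer n ≥ 2, the improper integral of 1/(1 − x_1² x_2² ··· x_n²) over the unit cube (0,1)^n equals Σ_{q=0}^∞ 1/(2q + 1)^n. -/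
open MeasureTheory Real

theorem unit_cube_integral_eq_tsum_odd (n : ℕ) (hn : 2 ≤ n) :
    (∫ x : Fin n → ℝ in Set.univ.pi fun _ => Set.Ioo (0 : ℝ) 1,
        (1 - ∏ i, (x i) ^ 2)⁻¹) =
      ∑' q : ℕ, (1 : ℝ) / (2 * (q : ℝ) + 1) ^ n := by
  have hms : MeasurableSet (Set.univ.pi fun _ : Fin n => Set.Ioo (0 : ℝ) 1) :=
    MeasurableSet.univ_pi fun _ => measurableSet_Ioo
  have hmu : (volume : Measure (Fin n → ℝ)).restrict
      (Set.univ.pi fun _ => Set.Ioo (0 : ℝ) 1) =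
      Measure.pi fun _ => (volume : Measure ℝ).restrict (Set.Ioo (0 : ℝ) 1) := by
    rw [volume_pi, Measure.restrict_pi_pi]
  have hone (q : ℕ) : ∫ t in Set.Ioo (0 : ℝ) 1, t ^ (2 * q) = 1 / (2 * (q : ℝ) + 1) := by
    rw [← integral_Ioc_eq_integral_Ioo, ← intervalIntegral.integral_of_le zero_le_one,
      integral_pow]
    simp
  have hint1 (q : ℕ) : Integrable (fun t : ℝ => t ^ (2 * q))
      (volume.restrict (Set.Ioo (0 : ℝ) 1)) :=
    ((continuous_pow (2 * q)).integrableOn_Icc (a := (0 : ℝ)) (b := 1)).mono_set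
      Set.Ioo_subset_Icc_self
  have hF (q : ℕ) : ∫ x : Fin n → ℝ in Set.univ.pi fun _ => Set.Ioo (0 : ℝ) 1,
      ∏ i, (x i) ^ (2 * q) = 1 / (2 * (q : ℝ) + 1) ^ n := by
    rw [hmu, integral_fintype_prod_eq_pow (fun t : ℝ => t ^ (2 * q)), hone]
    simp
  have hFi (q : ℕ) : Integrable (fun x : Fin n → ℝ => ∏ i, (x i) ^ (2 * q))
      (volume.restrict (Set.univ.pi fun _ => Set.Ioo (0 : ℝ) 1)) := by
    rw [hmu]
    exact Integrable.fintype_prod (f := fun _ t => t ^ (2 * q)) fun _ => hint1 q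
  have hsum : Summable fun q : ℕ => (1 : ℝ) / (2 * (q : ℝ) + 1) ^ n := by
    have h := (Real.summable_one_div_nat_pow.mpr (by omega : 1 < n)).comp_injective
      (i := fun q : ℕ => 2 * q + 1) (fun a b h => by simpa using h)
    refine h.congr fun q => ?_
    simp
  have hnn (q : ℕ) (x : Fin n → ℝ) : ‖∏ i, (x i) ^ (2 * q)‖ = ∏ i, (x i) ^ (2 * q) := by
    refine Real.norm_of_nonneg (Finset.prod_nonneg fun i _ => ?_)
    rw [pow_mul]
    positivity
  have key := integral_tsum_of_summable_integral_norm hFi (by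
    simp only [hnn, hF]
    exact hsum)
  simp only [hF] at key
  rw [key]
  refine setIntegral_congr_fun hms fun x hx => ?_
  have hx' : ∀ i, 0 < x i ∧ x i < 1 := fun i => hx i (Set.mem_univ i)
  have h0 : 0 ≤ ∏ i, (x i) ^ 2 := Finset.prod_nonneg fun i _ => sq_nonneg _
  have h1 : ∏ i, (x i) ^ 2 < 1 := by
    let i₀ : Fin n := ⟨0, by omega⟩
    calc ∏ i, (x i) ^ 2 ≤ (x i₀) ^ 2 := by
          rw [← Finset.mul_prod_erase _ _ (Finset.mem_univ i₀)]
          refine mul_le_of_le_one_right (sq_nonneg _) ?_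
          exact Finset.prod_le_one (fun i _ => sq_nonneg _)
            fun i _ => pow_le_one₀ (hx' i).1.le (hx' i).2.le
      _ < 1 := pow_lt_one₀ (hx' i₀).1.le (hx' i₀).2 two_ne_zero
  rw [Finset.prod_pow] at h0 h1
  simp only [pow_mul, Finset.prod_pow]
  exact (tsum_geometric_of_lt_one h0 h1).symm
end

section
/- For every integer n ≥ 2, ∫_{(0,1)^n} 1/(1 − x_1² x_2² ··· x_n²) dx_1 ··· dx_n = (1/(n−1)!) · ∫_0^∞ (ln(coth(x)))^{n−1} dx. -/
open MeasureTheory Real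

noncomputable def LL (u : ℝ) : ℝ := Real.log (1 + Real.exp (-u)) - Real.log (1 - Real.exp (-u))

lemma exp_neg_lt {u : ℝ} (hu : 0 < u) : Real.exp (-u) < 1 := by
  rw [Real.exp_lt_one_iff]; linarith

lemma LL_pos {u : ℝ} (hu : 0 < u) : 0 < LL u := by
  have h1 := exp_neg_lt hu
  have h2 := Real.exp_pos (-u)
  unfold LL
  have := Real.log_lt_log (x := 1 - Real.exp (-u)) (y := 1 + Real.exp (-u)) (by linarith) (by linarith)
  linarith

lemma exp_neg_LL {u : ℝ} (hu : 0 < u) :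
    Real.exp (-LL u) = (1 - Real.exp (-u)) / (1 + Real.exp (-u)) := by
  have h1 := exp_neg_lt hu
  have h2 := Real.exp_pos (-u)
  unfold LL
  rw [neg_sub, Real.exp_sub, Real.exp_log (by linarith), Real.exp_log (by linarith)]

lemma LL_LL {u : ℝ} (hu : 0 < u) : LL (LL u) = u := by
  have h1 := exp_neg_lt hu
  have h2 := Real.exp_pos (-u)
  have h3 : (1 + Real.exp (-u)) ≠ 0 := by positivity
  rw [LL, exp_neg_LL hu]
  have e1 : 1 + (1 - Real.exp (-u)) / (1 + Real.exp (-u)) = 2 / (1 + Real.exp (-u)) := by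
    field_simp; ring
  have e2 : 1 - (1 - Real.exp (-u)) / (1 + Real.exp (-u))
      = 2 * Real.exp (-u) / (1 + Real.exp (-u)) := by
    field_simp; ring
  rw [e1, e2, Real.log_div (by norm_num) h3, Real.log_div (by positivity) h3,
    Real.log_mul (by norm_num) (by positivity), Real.log_exp]
  ring

lemma log_coth {x : ℝ} (hx : 0 < x) : Real.log (coth x) = LL (2 * x) := by
  have h1 := exp_neg_lt (u := 2 * x) (by linarith)
  have h2 := Real.exp_pos (-(2 * x))
  rw [LL, ← Real.log_div (by positivity) (by linarith), coth]
  congr 1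
  have h3 : Real.exp (-(2 * x)) = Real.exp (-x) * Real.exp (-x) := by
    rw [← Real.exp_add]; ring_nf
  have h4 : Real.exp (x) * Real.exp (-x) = 1 := by
    rw [← Real.exp_add]; simp
  have hs := Real.sinh_pos_iff.2 hx
  rw [div_eq_div_iff hs.ne' (by linarith), Real.cosh_eq, Real.sinh_eq, h3]
  linear_combination (-Real.exp (-x)) * h4

lemma LL_deriv {u : ℝ} (hu : 0 < u) :
    HasDerivAt LL (-(2 * (Real.exp (-u) / (1 - Real.exp (-u) ^ 2)))) u := by
  have h1 := exp_neg_lt hu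
  have h2 := Real.exp_pos (-u)
  have h0 : HasDerivAt (fun u : ℝ => Real.exp (-u)) (Real.exp (-u) * (-1)) u :=
    (hasDerivAt_neg u).exp
  have := ((h0.const_add 1).log (by positivity)).sub ((h0.const_sub 1).log (by linarith))
  refine this.congr_deriv ?_
  have h3 : (1 + Real.exp (-u)) ≠ 0 := by positivity
  have h4 : (1 - Real.exp (-u)) ≠ 0 := by linarith
  have h5 : 1 - Real.exp (-u) ^ 2 = (1 - Real.exp (-u)) * (1 + Real.exp (-u)) := by ring
  rw [h5]
  field_simp
  ring

lemma subst_integral (m : ℕ) :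
    ∫ x in Set.Ioi (0 : ℝ), Real.log (coth x) ^ m =
      ∫ u in Set.Ioi (0 : ℝ), u ^ m * (Real.exp (-u) / (1 - Real.exp (-u) ^ 2)) := by
  have himg : (fun u => LL u / 2) '' Set.Ioi 0 = Set.Ioi (0 : ℝ) := by
    ext x
    constructor
    · rintro ⟨u, hu, rfl⟩
      exact half_pos (LL_pos hu)
    · intro hx
      have hx' : (0 : ℝ) < 2 * x := by have : (0 : ℝ) < x := hx; linarith
      refine ⟨LL (2 * x), LL_pos hx', ?_⟩
      simp only [LL_LL hx']
      ring
  have hinj : Set.InjOn (fun u => LL u / 2) (Set.Ioi 0) := by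
    intro a ha b hb hab
    have : LL a = LL b := by simpa using hab
    rw [← LL_LL ha, ← LL_LL hb, this]
  have key := integral_image_eq_integral_abs_deriv_smul (s := Set.Ioi (0 : ℝ))
    (f := fun u => LL u / 2) (f' := fun u => (-(2 * (Real.exp (-u) / (1 - Real.exp (-u) ^ 2)))) / 2)
    measurableSet_Ioi (fun x hx => ((LL_deriv hx).div_const 2).hasDerivWithinAt) hinj
    (fun x => Real.log (coth x) ^ m)
  rw [himg] at key
  rw [key]
  refine setIntegral_congr_fun measurableSet_Ioi ?_
  intro u hu
  have hu : 0 < u := hu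
  have h1 := exp_neg_lt hu
  have h2 := Real.exp_pos (-u)
  have h3 : 0 < 1 - Real.exp (-u) ^ 2 := by nlinarith
  have h4 : 0 < Real.exp (-u) / (1 - Real.exp (-u) ^ 2) := by positivity
  simp only [smul_eq_mul]
  rw [log_coth (half_pos (LL_pos hu)), mul_div_cancel₀ _ (two_ne_zero), LL_LL hu, neg_div,
    mul_div_cancel_left₀ _ (two_ne_zero), abs_neg, abs_of_pos h4, mul_comm]

lemma summ {n : ℕ} (hn : 2 ≤ n) : Summable fun k : ℕ => (1 / (2 * (k : ℝ) + 1)) ^ n := by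
  have h := (Real.summable_one_div_nat_pow (p := n)).2 hn
  have h2 := h.comp_injective (i := fun k : ℕ => 2 * k + 1) (fun a b hab => by simpa using hab)
  refine h2.congr ?_
  intro k
  simp [Function.comp]

lemma exp_int (m k : ℕ) :
    ∫ u in Set.Ioi (0 : ℝ), u ^ m * Real.exp (-((2 * (k : ℝ) + 1) * u)) =
      (1 / (2 * (k : ℝ) + 1)) ^ (m + 1) * (m.factorial : ℝ) := by
  have h := Real.integral_rpow_mul_exp_neg_mul_Ioi (a := (m : ℝ) + 1) (r := 2 * (k : ℝ) + 1)
    (by positivity) (by positivity)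
  rw [Real.Gamma_nat_eq_factorial] at h
  rw [show ((m : ℝ) + 1) = ((m + 1 : ℕ) : ℝ) by push_cast; ring, Real.rpow_natCast] at h
  rw [← h]
  refine setIntegral_congr_fun measurableSet_Ioi ?_
  intro u hu
  simp

lemma rhs_eq (m : ℕ) (hm : 1 ≤ m) :
    ∫ x in Set.Ioi (0 : ℝ), Real.log (coth x) ^ m =
      (∑' k : ℕ, (1 / (2 * (k : ℝ) + 1)) ^ (m + 1)) * (m.factorial : ℝ) := by
  rw [subst_integral]
  have H := hasSum_integral_of_summable_integral_norm (μ := volume.restrict (Set.Ioi (0 : ℝ)))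
    (F := fun (k : ℕ) (u : ℝ) => u ^ m * Real.exp (-((2 * (k : ℝ) + 1) * u))) ?_ ?_
  · simp only [exp_int] at H
    rw [← tsum_mul_right, H.tsum_eq]
    refine setIntegral_congr_fun measurableSet_Ioi ?_
    intro u hu
    have hu : 0 < u := hu
    have h1 := exp_neg_lt hu
    have h2 := Real.exp_pos (-u)
    have g := (hasSum_geometric_of_lt_one (r := Real.exp (-u) ^ 2) (by positivity)
      (by nlinarith)).mul_left (u ^ m * Real.exp (-u))
    simp only
    rw [div_eq_mul_inv, ← mul_assoc, ← g.tsum_eq]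
    congr 1
    ext k
    rw [mul_assoc, ← pow_mul, ← Real.exp_nat_mul, ← Real.exp_add]
    congr 2
    push_cast
    ring
  · intro k
    by_contra hc
    have := exp_int m k
    rw [integral_undef hc] at this
    have : (0 : ℝ) < (1 / (2 * (k : ℝ) + 1)) ^ (m + 1) * (m.factorial : ℝ) := by positivity
    linarith
  · refine ((summ (n := m + 1) (by omega)).mul_right (m.factorial : ℝ)).congr ?_
    intro k
    rw [← exp_int]
    refine setIntegral_congr_fun measurableSet_Ioi ?_
    intro u hu
    have hu : 0 < u := hu
    simp only
    rw [Real.norm_of_nonneg (by positivity)]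

lemma one_int (k : ℕ) : ∫ x in Set.Ioo (0 : ℝ) 1, (x ^ 2) ^ k = 1 / (2 * (k : ℝ) + 1) := by
  rw [← integral_Ioc_eq_integral_Ioo, ← intervalIntegral.integral_of_le zero_le_one]
  simp only [← pow_mul]
  rw [integral_pow]
  simp

lemma one_integrable (k : ℕ) :
    Integrable (fun x : ℝ => (x ^ 2) ^ k) (volume.restrict (Set.Ioo (0 : ℝ) 1)) := by
  by_contra hc
  have := one_int k
  rw [integral_undef hc] at this
  have : (0 : ℝ) < 1 / (2 * (k : ℝ) + 1) := by positivity
  linarith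

lemma cube_int (n k : ℕ) :
    (∫ x : Fin n → ℝ in Set.univ.pi fun _ => Set.Ioo (0 : ℝ) 1, ∏ i, ((x i) ^ 2) ^ k) =
      (1 / (2 * (k : ℝ) + 1)) ^ n := by
  rw [volume_pi, Measure.restrict_pi_pi,
    integral_fintype_prod_eq_prod (fun (_ : Fin n) (y : ℝ) => (y ^ 2) ^ k)]
  simp [one_int]

lemma lhs_eq (n : ℕ) (hn : 2 ≤ n) :
    (∫ x : Fin n → ℝ in Set.univ.pi fun _ => Set.Ioo (0 : ℝ) 1,
        (1 - ∏ i, (x i) ^ 2)⁻¹) = ∑' k : ℕ, (1 / (2 * (k : ℝ) + 1)) ^ n := by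
  have H := hasSum_integral_of_summable_integral_norm
    (μ := volume.restrict (Set.univ.pi fun _ : Fin n => Set.Ioo (0 : ℝ) 1))
    (F := fun (k : ℕ) (x : Fin n → ℝ) => ∏ i, ((x i) ^ 2) ^ k) ?_ ?_
  · simp only [cube_int] at H
    rw [H.tsum_eq]
    refine setIntegral_congr_fun (MeasurableSet.univ_pi fun _ => measurableSet_Ioo) ?_
    intro x hx
    have hx : ∀ i, 0 < x i ∧ x i < 1 := fun i => hx i (Set.mem_univ i)
    simp only [Finset.prod_pow]
    have h0 : 0 ≤ ∏ i, x i := Finset.prod_nonneg fun i _ => (hx i).1.le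
    have h1 : ∏ i, x i < 1 := by
      have : Nonempty (Fin n) := ⟨⟨0, by omega⟩⟩
      calc ∏ i, x i < ∏ i : Fin n, (1 : ℝ) :=
            Finset.prod_lt_prod_of_nonempty (fun i _ => (hx i).1) (fun i _ => (hx i).2)
              Finset.univ_nonempty
        _ = 1 := by simp
    exact (tsum_geometric_of_lt_one (by positivity) (by nlinarith)).symm
  · intro k
    rw [volume_pi, Measure.restrict_pi_pi]
    exact Integrable.fintype_prod (f := fun (_ : Fin n) (y : ℝ) => (y ^ 2) ^ k)
      fun _ => one_integrable k
  · refine (summ hn).congr ?_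
    intro k
    rw [← cube_int]
    congr 1
    ext x
    rw [Real.norm_of_nonneg (Finset.prod_nonneg fun i _ => by positivity)]

theorem unit_cube_integral_eq_integral_log_coth_pow (n : ℕ) (hn : 2 ≤ n) :
    (∫ x : Fin n → ℝ in Set.univ.pi fun _ => Set.Ioo (0 : ℝ) 1,
        (1 - ∏ i, (x i) ^ 2)⁻¹) =
      (1 / (Nat.factorial (n - 1) : ℝ)) *
        ∫ x in Set.Ioi (0 : ℝ), Real.log (coth x) ^ (n - 1) := by
  rw [lhs_eq n hn, rhs_eq (n - 1) (by omega), Nat.sub_add_cancel (by omega)]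
  have : ((n - 1).factorial : ℝ) ≠ 0 := by positivity
  field_simp
end
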